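/- Existence of an edge-minimal realization: Let r̲ : Fin n₁ → ℕ and c̲ : Fin n₂ → ℕ be non-increasing integer vectors and r̄ : Fin n₁ → ℕ, c̄ : Fin n₂ → ℕ integer vectors with r̲ ≤ r̄ and c̲ ≤ c̄ componentwise, such that the four-tuple (r̲, r̄, c̲, c̄) is realizable. Then there exists a realization M of (r̲, r̄, c̲, c̄) with exactly S_{n₂}(c̲) + max(0, δ₁) edges, where δ₁ = max over 1 ≤ j ≤ n₁ of (S_j(r̲) − S_j(c̲')) computed in the integers and c̲' is the conjugate of c̲ of length n₁; consequently this realization has the minimum possible number of edges among all realizations of (r̲, r̄, c̲, c̄). -/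

import Mathlib

open Finset

/-- Degree of row vertex `i` in a bipartite graph given by biadjacency matrix `M`. -/
def degU {n₁ n₂ : ℕ} (M : Fin n₁ → Fin n₂ → Bool) (i : Fin n₁) : ℕ :=
  (univ.filter fun j => M i j = true).card

/-- Degree of column vertex `j` in a bipartite graph given by biadjacency matrix `M`. -/
def degV {n₁ n₂ : ℕ} (M : Fin n₁ → Fin n₂ → Bool) (j : Fin n₂) : ℕ :=
  (univ.filter fun i => M i j = true).card

/-- `psum x k` = sum of the first `k` components of the vector `x`. -/
def psum {n : ℕ} (x : Fin n → ℕ) (k : ℕ) : ℕ :=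
  ∑ i ∈ univ.filter (fun i : Fin n => (i : ℕ) < k), x i

/-- `conj x i` = the `i`-th component (1-based) of the conjugate vector of `x`:
the number of indices `j` with `x j ≥ i`. -/
def conj {m : ℕ} (x : Fin m → ℕ) (i : ℕ) : ℕ :=
  (univ.filter fun j : Fin m => i ≤ x j).card

/-- The conjugate vector of `x`, taken with length `n`. -/
def conjVec (n : ℕ) {m : ℕ} (x : Fin m → ℕ) : Fin n → ℕ :=
  fun i => conj x ((i : ℕ) + 1)

/-- A pair `(r, c)` is bi-graphical if some biadjacency matrix realizes these
degrees exactly. -/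
def BiGraphical {n₁ n₂ : ℕ} (r : Fin n₁ → ℕ) (c : Fin n₂ → ℕ) : Prop :=
  ∃ M : Fin n₁ → Fin n₂ → Bool, (∀ i, degU M i = r i) ∧ (∀ j, degV M j = c j)

/-- `M` is a realization of the four-tuple `(rl, ru, cl, cu)`. -/
def IsRealization {n₁ n₂ : ℕ} (rl ru : Fin n₁ → ℕ) (cl cu : Fin n₂ → ℕ)
    (M : Fin n₁ → Fin n₂ → Bool) : Prop :=
  (∀ i, rl i ≤ degU M i ∧ degU M i ≤ ru i) ∧ (∀ j, cl j ≤ degV M j ∧ degV M j ≤ cu j)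

/-- The four-tuple `(rl, ru, cl, cu)` is realizable. -/
def Realizable {n₁ n₂ : ℕ} (rl ru : Fin n₁ → ℕ) (cl cu : Fin n₂ → ℕ) : Prop :=
  ∃ M, IsRealization rl ru cl cu M

/-- The number of edges of the bipartite graph given by `M`. -/
def edges {n₁ n₂ : ℕ} (M : Fin n₁ → Fin n₂ → Bool) : ℕ :=
  (univ.filter fun p : Fin n₁ × Fin n₂ => M p.1 p.2 = true).card

/-- `max (0, δ₁)` where `δ₁ = max over 1 ≤ j ≤ n₁ of (S_j(rl) - S_j(cl'))`
computed in the integers, `cl'` being the conjugate of `cl` of length `n₁`. -/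
def delta1 {n₁ n₂ : ℕ} (rl : Fin n₁ → ℕ) (cl : Fin n₂ → ℕ) : ℕ :=
  (Finset.Icc 1 n₁).sup fun j =>
    ((psum rl j : ℤ) - (psum (conjVec n₁ cl) j : ℤ)).toNat

/-! Moving ones along a walk that alternates between ones and zeros of a realization `M` transfers
the surplus of one row to another without changing the column degrees. So if `M` has as few edges
as possible, every column that meets a row reachable from a row with surplus has degree exactly
`cl`, as otherwise an edge could be saved there. With `A` the unreachable rows and `B` the columns
meeting reachable ones, `M` is full on `A × B` and empty on `Aᶜ × Bᶜ`, hence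
`edges M = ∑ i ∈ A, rl i + ∑ j ∈ B, cl j - |A| |B|`. Since `rl` is sorted, this is at most the value
`∑ j, cl j + psum rl |A| - ∑ j, min |A| (cl j)`, which bounds the edges of any realization from
below. -/

section Prefix

variable {n : ℕ}

lemma psum_self (x : Fin n → ℕ) : psum x n = ∑ i, x i := by
  simp [psum]

lemma psum_eq_sum_castLE (x : Fin n → ℕ) {k : ℕ} (hk : k ≤ n) :
    psum x k = ∑ i : Fin k, x (i.castLE hk) := by
  have himage : univ.filter (fun i : Fin n => (i : ℕ) < k) = univ.map (Fin.castLEEmb hk) := by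
    ext i
    simp only [mem_filter_univ, mem_map, mem_univ, true_and, Fin.castLEEmb_apply]
    exact ⟨fun hi => ⟨⟨i, hi⟩, rfl⟩, fun ⟨j, hj⟩ => hj ▸ j.isLt⟩
  simp only [psum, himage, sum_map, Fin.castLEEmb_apply]

lemma val_le_val_of_strictMono {m : ℕ} {f : Fin m → Fin n} (hf : StrictMono f) (i : Fin m) :
    (i : ℕ) ≤ f i := by
  have hcard : ((Iio i).image f).card ≤ (Iio (f i)).card := card_le_card fun x hx => by
    obtain ⟨j, hj, rfl⟩ := mem_image.1 hx
    exact mem_Iio.2 (hf (mem_Iio.1 hj))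
  rwa [card_image_of_injective _ hf.injective, Fin.card_Iio, Fin.card_Iio] at hcard

lemma sum_le_psum_card {x : Fin n → ℕ} (hx : Antitone x) (A : Finset (Fin n)) :
    ∑ i ∈ A, x i ≤ psum x A.card := by
  have hA : A.card ≤ n := card_finset_fin_le A
  let e := A.orderEmbOfFin rfl
  calc ∑ i ∈ A, x i = ∑ i ∈ univ.image e, x i :=
        sum_congr (image_orderEmbOfFin_univ A rfl).symm fun _ _ => rfl
    _ = ∑ i : Fin A.card, x (e i) := sum_image e.injective.injOn
    _ ≤ ∑ i : Fin A.card, x (i.castLE hA) :=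
        sum_le_sum fun i _ => hx (val_le_val_of_strictMono e.strictMono i)
    _ = psum x A.card := (psum_eq_sum_castLE x hA).symm

lemma psum_conjVec {m k : ℕ} (c : Fin m → ℕ) (hk : k ≤ n) :
    psum (conjVec n c) k = ∑ j, min k (c j) := by
  calc psum (conjVec n c) k
      = ∑ i : Fin k, (univ.filter fun j => (i : ℕ) < c j).card := psum_eq_sum_castLE _ hk
    _ = ∑ j, (univ.filter fun i : Fin k => (i : ℕ) < c j).card :=
        sum_card_bipartiteAbove_eq_sum_card_bipartiteBelow _
    _ = ∑ j, min k (c j) := by simp only [Fin.card_filter_val_lt]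

end Prefix

section Counting

variable {n₁ n₂ : ℕ}

lemma delta1_le_iff {rl : Fin n₁ → ℕ} {cl : Fin n₂ → ℕ} {d : ℕ} :
    delta1 rl cl ≤ d ↔ ∀ k ≤ n₁, psum rl k ≤ d + ∑ j, min k (cl j) := by
  simp only [delta1, Finset.sup_le_iff, mem_Icc, and_imp]
  refine ⟨fun h k hk => ?_, fun h k _ hk => ?_⟩
  · rcases Nat.eq_zero_or_pos k with rfl | hpos
    · simp [psum]
    · have := h k hpos hk
      rw [psum_conjVec cl hk] at this
      omega
  · have := h k hk
    rw [psum_conjVec cl hk]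
    omega

lemma edges_eq_sum_degV (M : Fin n₁ → Fin n₂ → Bool) : edges M = ∑ j, degV M j := by
  simp only [edges, degV, card_filter, Fintype.sum_prod_type_right]

lemma sum_degU_eq_sum_card_filter (M : Fin n₁ → Fin n₂ → Bool) (A : Finset (Fin n₁)) :
    ∑ i ∈ A, degU M i = ∑ j, (A.filter fun i => M i j = true).card :=
  sum_card_bipartiteAbove_eq_sum_card_bipartiteBelow _

lemma sum_degU_le_sum_min (M : Fin n₁ → Fin n₂ → Bool) (A : Finset (Fin n₁)) :
    ∑ i ∈ A, degU M i ≤ ∑ j, min A.card (degV M j) := by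
  rw [sum_degU_eq_sum_card_filter]
  exact sum_le_sum fun j _ =>
    le_min (card_filter_le _ _) (card_le_card (filter_subset_filter _ (subset_univ A)))

lemma edges_add_card_mul_card {M : Fin n₁ → Fin n₂ → Bool}
    {A : Finset (Fin n₁)} {B : Finset (Fin n₂)}
    (hfull : ∀ i ∈ A, ∀ j ∈ B, M i j = true) (hempty : ∀ i ∉ A, ∀ j ∉ B, M i j = false) :
    edges M + A.card * B.card = ∑ i ∈ A, degU M i + ∑ j ∈ B, degV M j := by
  have hB : ∀ j ∈ B, (A.filter fun i => M i j = true).card = A.card := fun j hj =>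
    congrArg card (filter_true_of_mem fun i hi => hfull i hi j hj)
  have hBc : ∀ j ∈ Bᶜ, (A.filter fun i => M i j = true).card = degV M j := fun j hj => by
    refine congrArg card ((filter_subset_filter _ (subset_univ A)).antisymm fun i hi => ?_)
    have hij : M i j = true := (mem_filter.1 hi).2
    refine mem_filter.2 ⟨by_contra fun hiA => ?_, hij⟩
    simp [hempty i hiA j (mem_compl.1 hj)] at hij
  have hA : ∑ i ∈ A, degU M i = B.card * A.card + ∑ j ∈ Bᶜ, degV M j := by
    rw [sum_degU_eq_sum_card_filter, ← sum_add_sum_compl B, sum_congr rfl hB, sum_congr rfl hBc,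
      sum_const, smul_eq_mul]
  rw [hA, edges_eq_sum_degV, ← sum_add_sum_compl B]
  ring

end Counting

lemma IsRealization.sum_add_delta1_le_edges {n₁ n₂ : ℕ} {rl ru : Fin n₁ → ℕ} {cl cu : Fin n₂ → ℕ}
    {M : Fin n₁ → Fin n₂ → Bool} (hM : IsRealization rl ru cl cu M) :
    ∑ j, cl j + delta1 rl cl ≤ edges M := by
  have hsum : ∑ j, cl j ≤ ∑ j, degV M j := sum_le_sum fun j _ => (hM.2 j).1
  rw [edges_eq_sum_degV]
  suffices delta1 rl cl ≤ ∑ j, degV M j - ∑ j, cl j by omega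
  refine delta1_le_iff.2 fun k hk => ?_
  have hrows : psum rl k ≤ ∑ j, min k (degV M j) := by
    have hcard : (univ.filter fun i : Fin n₁ => (i : ℕ) < k).card = k := by
      rw [Fin.card_filter_val_lt, min_eq_right hk]
    calc psum rl k ≤ ∑ i ∈ univ.filter (fun i : Fin n₁ => (i : ℕ) < k), degU M i :=
          sum_le_sum fun i _ => (hM.1 i).1
      _ ≤ ∑ j, min k (degV M j) := by
          simpa only [hcard] using
            sum_degU_le_sum_min M (univ.filter fun i : Fin n₁ => (i : ℕ) < k)
  have hcols : ∑ j, min k (degV M j) + ∑ j, cl j ≤ ∑ j, degV M j + ∑ j, min k (cl j) := by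
    rw [← sum_add_distrib, ← sum_add_distrib]
    refine sum_le_sum fun j _ => ?_
    have := (hM.2 j).1
    omega
  omega

section SetEntry

variable {α β : Type*} [DecidableEq α] [DecidableEq β]

/-- The matrix `M` with its entry at `(a, b)` replaced by `v`: adds or deletes the edge `ab`. -/
def setEntry (M : α → β → Bool) (a : α) (b : β) (v : Bool) : α → β → Bool :=
  fun i j => if i = a ∧ j = b then v else M i j

lemma setEntry_self (M : α → β → Bool) (a : α) (b : β) (v : Bool) : setEntry M a b v a b = v :=
  if_pos ⟨rfl, rfl⟩

lemma setEntry_of_row_ne (M : α → β → Bool) {a i : α} (hi : i ≠ a) (b : β) (v : Bool) :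
    setEntry M a b v i = M i :=
  funext fun _ => if_neg fun h => hi h.1

lemma setEntry_of_col_ne (M : α → β → Bool) {b j : β} (hj : j ≠ b) (a i : α) (v : Bool) :
    setEntry M a b v i j = M i j :=
  if_neg fun h => hj h.2

lemma setEntry_setEntry_cancel {M : α → β → Bool} {a : α} {b : β} {v : Bool} (h : M a b = v)
    (w : Bool) : setEntry (setEntry M a b w) a b v = M := by
  funext i j
  by_cases hij : i = a ∧ j = b
  · obtain ⟨rfl, rfl⟩ := hij
    rw [setEntry_self, h]
  · simp only [setEntry, if_neg hij]

end SetEntry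

section Augmentation

variable {n₁ n₂ : ℕ} {M : Fin n₁ → Fin n₂ → Bool}

lemma degU_setEntry_true {a : Fin n₁} {b : Fin n₂} (h : M a b = false) :
    degU (setEntry M a b true) = degU M + Pi.single a 1 := by
  funext i
  rcases eq_or_ne i a with rfl | hi
  · have hrow : univ.filter (fun j => setEntry M i b true i j = true) =
        insert b (univ.filter fun j => M i j = true) := by
      ext j
      by_cases hj : j = b <;> simp [setEntry, hj]
    simp [degU, hrow, h]
  · simp [degU, setEntry_of_row_ne M hi, hi]

lemma degV_setEntry_true {a : Fin n₁} {b : Fin n₂} (h : M a b = false) :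
    degV (setEntry M a b true) = degV M + Pi.single b 1 := by
  have htranspose : Function.swap (setEntry M a b true) = setEntry (Function.swap M) b a true := by
    funext j i
    simp only [Function.swap, setEntry, and_comm]
  calc degV (setEntry M a b true) = degU (setEntry (Function.swap M) b a true) :=
        congrArg degU htranspose
    _ = degV M + Pi.single b 1 := degU_setEntry_true h

/-- The rows reached from a row of `E` by an alternating walk of `k` steps. A step goes from `i'`
to `i` through a column `j` in which `i'` has a one and `i` has a zero, so that the one can be
moved from `i'` to `i` without changing the column degrees. -/
def altReach {α β : Type*} (M : α → β → Bool) (E : Set α) : ℕ → Set α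
  | 0 => E
  | k + 1 => {i | ∃ i' ∈ altReach M E k, ∃ j, M i' j = true ∧ M i j = false}

lemma altReach_subset_of_avoids {α β : Type*} {M M' : α → β → Bool} {E : Set α} {a : α}
    (hrows : ∀ i ≠ a, M' i = M i) {k : ℕ} (havoid : ∀ l ≤ k, a ∉ altReach M E l) :
    altReach M E k ⊆ altReach M' E k := by
  induction k with
  | zero => exact subset_rfl
  | succ k ih =>
    intro i hi
    have hia : i ≠ a := fun h => havoid _ le_rfl (h ▸ hi)
    obtain ⟨i', hi', j, hone, hzero⟩ := hi
    have hia' : i' ≠ a := fun h => havoid k k.le_succ (h ▸ hi')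
    refine ⟨i', ih (fun l hl => havoid l (hl.trans k.le_succ)) hi', j, ?_, ?_⟩
    · rwa [hrows i' hia']
    · rwa [hrows i hia]

lemma exists_add_single_eq_deg_of_mem_altReach {E : Set (Fin n₁)} {k : ℕ} {i : Fin n₁} {j : Fin n₂}
    (hi : i ∈ altReach M E k) (hij : M i j = true) :
    ∃ M' : Fin n₁ → Fin n₂ → Bool, ∃ i₀ ∈ E,
      degU M' + Pi.single i₀ 1 = degU M ∧ degV M' + Pi.single j 1 = degV M := by
  induction k using Nat.strong_induction_on generalizing M i j with
  | _ k ih =>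
  -- A walk of least length does not revisit `i`, so it survives changes in row `i`.
  by_cases hshorter : ∃ l < k, i ∈ altReach M E l
  · obtain ⟨l, hl, hil⟩ := hshorter
    exact ih l hl hil hij
  push Not at hshorter
  set D := setEntry M i j false with hD
  have hMD : setEntry D i j true = M := setEntry_setEntry_cancel hij false
  have hDij : D i j = false := setEntry_self M i j false
  have hUM : degU M = degU D + Pi.single i 1 := by rw [← degU_setEntry_true hDij, hMD]
  have hVM : degV M = degV D + Pi.single j 1 := by rw [← degV_setEntry_true hDij, hMD]
  cases k with
  | zero => exact ⟨D, i, hi, hUM.symm, hVM.symm⟩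
  | succ k =>
    obtain ⟨i', hi', b, hone, hzero⟩ := hi
    have hi'i : i' ≠ i := by rintro rfl; simp [hone] at hzero
    have hbj : b ≠ j := by rintro rfl; simp [hij] at hzero
    have hDib : D i b = false := (setEntry_of_col_ne M hbj i i false).trans hzero
    have hrows : ∀ x ≠ i, setEntry D i b true x = M x := fun x hx => by
      rw [setEntry_of_row_ne D hx, hD, setEntry_of_row_ne M hx]
    obtain ⟨M', i₀, hi₀, hU, hV⟩ := ih k k.lt_succ_self
      (altReach_subset_of_avoids hrows (fun l hl => hshorter l (Nat.lt_succ_of_le hl)) hi')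
      (by rwa [hrows i' hi'i] : setEntry D i b true i' b = true)
    rw [degU_setEntry_true hDib, ← hUM] at hU
    rw [degV_setEntry_true hDib, add_left_inj] at hV
    exact ⟨M', i₀, hi₀, hU, by rw [hV, hVM]⟩

end Augmentation

lemma le_of_add_single_eq {α : Type*} [DecidableEq α] {l f g : α → ℕ} {a : α}
    (h : f + Pi.single a 1 = g) (hl : ∀ i, l i ≤ g i) (ha : l a < g a) (i : α) : l i ≤ f i := by
  subst h
  rcases eq_or_ne i a with rfl | hi
  · exact Nat.lt_succ_iff.1 (by simpa using ha)
  · simpa [hi] using hl i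

section Minimal

variable {n₁ n₂ : ℕ} {rl ru : Fin n₁ → ℕ} {cl cu : Fin n₂ → ℕ} {M M' : Fin n₁ → Fin n₂ → Bool}

lemma IsRealization.of_add_single_eq (hM : IsRealization rl ru cl cu M)
    {i : Fin n₁} {j : Fin n₂} (hi : rl i < degU M i) (hj : cl j < degV M j)
    (hU : degU M' + Pi.single i 1 = degU M) (hV : degV M' + Pi.single j 1 = degV M) :
    IsRealization rl ru cl cu M' := by
  have hU_le : degU M' ≤ degU M := hU ▸ le_self_add
  have hV_le : degV M' ≤ degV M := hV ▸ le_self_add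
  exact ⟨fun x => ⟨le_of_add_single_eq hU (fun x => (hM.1 x).1) hi x, (hU_le x).trans (hM.1 x).2⟩,
    fun y => ⟨le_of_add_single_eq hV (fun y => (hM.2 y).1) hj y, (hV_le y).trans (hM.2 y).2⟩⟩

lemma edges_lt_edges_of_degV_add_single_eq {j : Fin n₂}
    (hV : degV M' + Pi.single j 1 = degV M) : edges M' < edges M := by
  simp [edges_eq_sum_degV, ← hV, sum_add_distrib]

lemma degV_eq_of_mem_altReach (hM : IsRealization rl ru cl cu M)
    (hmin : ∀ N, IsRealization rl ru cl cu N → edges M ≤ edges N) {k : ℕ} {i : Fin n₁}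
    {j : Fin n₂} (hi : i ∈ altReach M {i | rl i < degU M i} k) (hij : M i j = true) :
    degV M j = cl j := by
  by_contra hne
  have hj : cl j < degV M j := lt_of_le_of_ne (hM.2 j).1 (Ne.symm hne)
  obtain ⟨M', i₀, hi₀, hU, hV⟩ := exists_add_single_eq_deg_of_mem_altReach hi hij
  exact (edges_lt_edges_of_degV_add_single_eq hV).not_ge
    (hmin M' (hM.of_add_single_eq hi₀ hj hU hV))

/-- A set `A` of rows and a set `B` of columns certifying that `M` has the fewest edges for the
lower bounds `rl` and `cl`: the bounds are attained on `A` and `B`, and `M` is full on `A × B` and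
empty on `Aᶜ × Bᶜ`. -/
structure IsTightCut (rl : Fin n₁ → ℕ) (cl : Fin n₂ → ℕ) (M : Fin n₁ → Fin n₂ → Bool)
    (A : Finset (Fin n₁)) (B : Finset (Fin n₂)) : Prop where
  degU_eq : ∀ i ∈ A, degU M i = rl i
  degV_eq : ∀ j ∈ B, degV M j = cl j
  full : ∀ i ∈ A, ∀ j ∈ B, M i j = true
  empty : ∀ i ∉ A, ∀ j ∉ B, M i j = false

lemma exists_isTightCut_of_forall_edges_le (hM : IsRealization rl ru cl cu M)
    (hmin : ∀ N, IsRealization rl ru cl cu N → edges M ≤ edges N) :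
    ∃ A B, IsTightCut rl cl M A B := by
  classical
  let R : Set (Fin n₁) := ⋃ k, altReach M {i | rl i < degU M i} k
  have hR {i} : i ∈ R ↔ ∃ k, i ∈ altReach M {i | rl i < degU M i} k := Set.mem_iUnion
  refine ⟨univ.filter (· ∉ R), univ.filter fun j => ∃ i ∈ R, M i j = true, ?_, ?_, ?_, ?_⟩
  all_goals simp only [mem_filter_univ, not_not]
  · intro i hi
    by_contra hne
    exact hi (hR.2 ⟨0, lt_of_le_of_ne (hM.1 i).1 (Ne.symm hne)⟩)
  · rintro j ⟨i, hi, hij⟩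
    obtain ⟨k, hk⟩ := hR.1 hi
    exact degV_eq_of_mem_altReach hM hmin hk hij
  · rintro i hi j ⟨i', hi', hij⟩
    obtain ⟨k, hk⟩ := hR.1 hi'
    by_contra hzero
    exact hi (hR.2 ⟨k + 1, i', hk, j, hij, Bool.eq_false_of_not_eq_true hzero⟩)
  · intro i hi j hj
    exact Bool.eq_false_of_not_eq_true fun hij => hj ⟨i, hi, hij⟩

lemma IsTightCut.edges_le {A : Finset (Fin n₁)} {B : Finset (Fin n₂)}
    (hcut : IsTightCut rl cl M A B) (hrl : Antitone rl) :
    edges M ≤ ∑ j, cl j + delta1 rl cl := by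
  have hedges : edges M + A.card * B.card = ∑ i ∈ A, rl i + ∑ j ∈ B, cl j := by
    rw [edges_add_card_mul_card hcut.full hcut.empty, sum_congr rfl hcut.degU_eq,
      sum_congr rfl hcut.degV_eq]
  have hrows : ∑ i ∈ A, rl i ≤ delta1 rl cl + ∑ j, min A.card (cl j) :=
    (sum_le_psum_card hrl A).trans (delta1_le_iff.1 le_rfl _ (card_finset_fin_le A))
  have hcols : ∑ j, min A.card (cl j) ≤ A.card * B.card + ∑ j ∈ Bᶜ, cl j := by
    rw [← sum_add_sum_compl B, mul_comm]
    exact add_le_add (sum_le_card_nsmul _ _ _ fun j _ => min_le_left _ _)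
      (sum_le_sum fun j _ => min_le_right _ _)
  have hsplit : ∑ j ∈ B, cl j + ∑ j ∈ Bᶜ, cl j = ∑ j, cl j := sum_add_sum_compl B cl
  omega

end Minimal

theorem exists_edge_minimal_realization_general {n₁ n₂ : ℕ}
    (rl ru : Fin n₁ → ℕ) (cl cu : Fin n₂ → ℕ)
    (hrl : Antitone rl) (hreal : Realizable rl ru cl cu) :
    ∃ M : Fin n₁ → Fin n₂ → Bool, IsRealization rl ru cl cu M ∧
      edges M = psum cl n₂ + delta1 rl cl ∧
      ∀ N : Fin n₁ → Fin n₂ → Bool, IsRealization rl ru cl cu N →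
        edges M ≤ edges N := by
  obtain ⟨M, hM, hmin⟩ := Set.exists_min_image {M | IsRealization rl ru cl cu M} edges
    (Set.toFinite _) hreal
  obtain ⟨A, B, hcut⟩ := exists_isTightCut_of_forall_edges_le hM hmin
  refine ⟨M, hM, ?_, hmin⟩
  rw [psum_self]
  exact le_antisymm (hcut.edges_le hrl) hM.sum_add_delta1_le_edges

/-- Existence of an edge-minimal realization with exactly
`S_{n₂}(cl) + max(0, δ₁)` edges. -/
theorem exists_edge_minimal_realization {n₁ n₂ : ℕ}
    (rl ru : Fin n₁ → ℕ) (cl cu : Fin n₂ → ℕ)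
    (hrl : Antitone rl) (hcl : Antitone cl) (hr : rl ≤ ru) (hc : cl ≤ cu)
    (hreal : Realizable rl ru cl cu) :
    ∃ M : Fin n₁ → Fin n₂ → Bool, IsRealization rl ru cl cu M ∧
      edges M = psum cl n₂ + delta1 rl cl ∧
      ∀ N : Fin n₁ → Fin n₂ → Bool, IsRealization rl ru cl cu N →
        edges M ≤ edges N :=
  exists_edge_minimal_realization_general rl ru cl cu hrl hreal
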